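/- For every integer k ≥ 2, there exists a standard Borel space X with a nonatomic σ-finite Borel measure μ satisfying μ(X) = ∞, and an invertible measure-preserving transformation T : X → X, such that the k-fold Cartesian product of T is conservative but not ergodic, while T itself is conservative and ergodic. -/

import Mathlib

/-!
The binary odometer `T` adds `1` with carry to a sequence of binary digits; `T^[2 ^ n]` then only
flips the `n`-th digit wherever that digit is `0`. Let `T` act on the sequences whose even digits
are arbitrary and whose odd digits agree with `0, 1, 0, 1, …` up to finitely many exceptions, so
that carries always terminate. Digit flips identify this space with the noncompact group
`(ℤ/2)^ℕ × ⨁_ℕ ℤ/2`, whose infinite Haar measure `T` preserves, being piecewise a translation.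

* Ergodicity: a set invariant under `T` is invariant under every digit flip, so under a dense
  subgroup of translations.
* Conservativity of the powers: the flips at places `2 n` tend to the identity, so for large `n`
  the points that stay in `A` under every pattern of such flips in the `k` coordinates form a set of
  positive measure. Some pattern makes the `2 n`-th digits of all coordinates of such a point `0`,
  and from there `T^[2 ^ (2 n)]` leads to the complementary pattern, hence again into `A`.
* Non-ergodicity of the powers: `T` changes the parity of the `0`-th digit, so the set where two
  coordinates have the same `0`-th digit is invariant.
-/

open MeasureTheory

/-- `T` is *conservative* w.r.t. `μ`: for every measurable set `A` of positive measure
there is a positive integer `n` with `μ (T⁻ⁿ A ∩ A) > 0`. -/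
def IsConservativeMap {X : Type*} [MeasurableSpace X] (μ : Measure X) (T : X → X) : Prop :=
  ∀ A : Set X, MeasurableSet A → 0 < μ A →
    ∃ n : ℕ, 0 < n ∧ 0 < μ (T^[n] ⁻¹' A ∩ A)

/-- `T` is *ergodic* w.r.t. `μ`: every measurable set `A` with `T⁻¹ A = A` mod `μ`
is null or conull. -/
def IsErgodicMap {X : Type*} [MeasurableSpace X] (μ : Measure X) (T : X → X) : Prop :=
  ∀ A : Set X, MeasurableSet A → μ (symmDiff (T ⁻¹' A) A) = 0 →
    μ A = 0 ∨ μ Aᶜ = 0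

open Filter Topology Set
open scoped ENNReal symmDiff

section Translation

variable {G : Type*} [AddGroup G] [MeasurableSpace G] {μ : Measure G} [μ.IsAddLeftInvariant]

theorem measurePreserving_of_forall_eq_add [MeasurableAdd G] {ι : Type*} [Countable ι]
    [MeasurableSpace ι] [MeasurableSingletonClass ι] (e : G ≃ᵐ G) {c : G → ι} (hc : Measurable c)
    (v : ι → G) (he : ∀ x, e x = v (c x) + x) : MeasurePreserving e μ μ := by
  refine ⟨e.measurable, ?_⟩
  let P : ι → Set G := fun i => c ⁻¹' {i}
  let Q : ι → Set G := fun i => e.symm ⁻¹' P i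
  have hP : ∀ i, MeasurableSet (P i) := fun i => hc (measurableSet_singleton i)
  have hQ : ∀ i, MeasurableSet (Q i) := fun i => e.symm.measurable (hP i)
  have e_eq : ∀ {i x}, x ∈ P i → e x = v i + x := fun {i x} hx => by rw [he, show c x = i from hx]
  have preimage_e : ∀ i, e ⁻¹' Q i = P i := fun i => by ext x; simp [Q]
  have preimage_add : ∀ i, (v i + ·) ⁻¹' Q i = P i := fun i => by
    ext x
    refine ⟨fun hx => ?_, fun hx => ?_⟩
    · have h : v i + e.symm (v i + x) = v i + x := by rw [← e_eq hx, e.apply_symm_apply]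
      rwa [← add_left_cancel h]
    · rwa [mem_preimage, ← e_eq hx, ← mem_preimage, preimage_e]
  refine Measure.ext_of_iUnion_eq_univ (s := Q) ?_ fun i => ?_
  · exact eq_univ_of_forall fun x => mem_iUnion.2 ⟨c (e.symm x), rfl⟩
  calc (μ.map e).restrict (Q i)
      = (μ.restrict (P i)).map e := by rw [Measure.restrict_map e.measurable (hQ i), preimage_e]
    _ = (μ.restrict (P i)).map (v i + ·) :=
        Measure.map_congr ((ae_restrict_mem (hP i)).mono fun x => e_eq)
    _ = (μ.map (v i + ·)).restrict (Q i) := by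
        rw [Measure.restrict_map (measurable_const_add _) (hQ i), preimage_add]
    _ = μ.restrict (Q i) := by rw [map_add_left_eq_self]

variable [TopologicalSpace G] [IsTopologicalAddGroup G] [BorelSpace G]
  [μ.InnerRegularCompactLTTop]

theorem tendsto_measure_symmDiff_preimage_add [IsLocallyFiniteMeasure μ] {A : Set G}
    (hA : MeasurableSet A) (hμA : μ A ≠ ∞) (g : G) :
    Tendsto (fun h => μ (((h + ·) ⁻¹' A) ∆ ((g + ·) ⁻¹' A))) (𝓝 g) (𝓝 0) := by
  let f : G → C(G, G) := fun h => ⟨(h + ·), continuous_const_add h⟩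
  have hf : Continuous f := ContinuousMap.continuous_of_continuous_uncurry _ continuous_add
  have hfμ : ∀ h, MeasurePreserving (f h) μ μ := measurePreserving_add_left μ
  have h := tendsto_measure_symmDiff_preimage_nhds_zero (hf.tendsto g)
    (.of_forall hfμ) (hfμ g) hA.nullMeasurableSet hμA
  exact h

theorem preimage_add_ae_le_of_dense [IsLocallyFiniteMeasure μ] [SigmaFinite μ] {s : Set G}
    (hs : MeasurableSet s) (hd : Dense {g : G | (g + ·) ⁻¹' s = s}) (g : G) :
    (g + ·) ⁻¹' s ≤ᵐ[μ] s := by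
  let A : ℕ → Set G := fun n => s ∩ spanningSets μ n
  have hA : ∀ n, μ (((g + ·) ⁻¹' A n) \ s) = 0 := fun n => by
    have hAm : MeasurableSet (A n) := hs.inter (measurableSet_spanningSets μ n)
    have hAfin : μ (A n) ≠ ∞ :=
      measure_ne_top_of_subset inter_subset_right (measure_spanningSets_lt_top μ n).ne
    refine nonpos_iff_eq_zero.1 <| ge_of_tendsto_of_frequently
      (tendsto_measure_symmDiff_preimage_add hAm hAfin g) ?_
    refine (mem_closure_iff_frequently.1 (hd g)).mono fun h hh => measure_mono fun x hx => ?_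
    exact .inr ⟨hx.1, fun hx' => hx.2 (hh.subset hx'.1)⟩
  have hcover : (g + ·) ⁻¹' s = ⋃ n, (g + ·) ⁻¹' A n := by
    rw [← preimage_iUnion, ← inter_iUnion, iUnion_spanningSets, inter_univ]
  rw [ae_le_set, hcover, iUnion_sdiff]
  exact measure_iUnion_null hA

theorem aeconst_of_dense_setOf_preimage_add_eq [SecondCountableTopology G]
    [IsLocallyFiniteMeasure μ] [SigmaFinite μ] {s : Set G}
    (hs : MeasurableSet s) (hd : Dense {g : G | (g + ·) ⁻¹' s = s}) :
    EventuallyConst s (ae μ) := by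
  refine aeconst_of_forall_preimage_vadd_ae_eq G hs.nullMeasurableSet fun g => ?_
  refine (preimage_add_ae_le_of_dense hs hd g).antisymm ?_
  have hd' : Dense {g : G | (g + ·) ⁻¹' sᶜ = sᶜ} := by simpa only [preimage_compl, compl_inj_iff]
  simpa using (preimage_add_ae_le_of_dense (μ := μ) hs.compl hd' g).compl

variable [IsLocallyFiniteMeasure μ] {ι : Type*} [Finite ι] {v : ℕ → ι → G}

theorem exists_measure_iInter_preimage_add_pos (hv : ∀ σ, Tendsto (v · σ) atTop (𝓝 0))
    {A : Set G} (hA : MeasurableSet A) (hpos : 0 < μ A) (hfin : μ A ≠ ∞) :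
    ∃ n, 0 < μ (⋂ σ, (v n σ + ·) ⁻¹' A) := by
  have := Fintype.ofFinite ι
  have hlim : Tendsto (fun n => ∑ σ, μ (((v n σ + ·) ⁻¹' A) ∆ A)) atTop (𝓝 0) := by
    have h := tendsto_measure_symmDiff_preimage_add hA hfin 0
    simp only [zero_add, preimage_id'] at h
    simpa using tendsto_finsetSum Finset.univ fun σ _ => h.comp (hv σ)
  obtain ⟨n, hn⟩ := (hlim.eventually_lt_const hpos).exists
  refine ⟨n, pos_of_ne_zero fun h0 => hn.not_ge ?_⟩
  have hcover : A ⊆ (⋂ σ, (v n σ + ·) ⁻¹' A) ∪ ⋃ σ, ((v n σ + ·) ⁻¹' A) ∆ A := by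
    intro x hx
    by_cases h : ∀ σ, v n σ + x ∈ A
    · exact .inl (mem_iInter.2 h)
    · obtain ⟨σ, hσ⟩ := not_forall.1 h
      exact .inr (mem_iUnion.2 ⟨σ, .inr ⟨hx, hσ⟩⟩)
  calc μ A ≤ μ (⋂ σ, (v n σ + ·) ⁻¹' A) + μ (⋃ σ, ((v n σ + ·) ⁻¹' A) ∆ A) :=
        (measure_mono hcover).trans (measure_union_le _ _)
    _ ≤ ∑ σ, μ (((v n σ + ·) ⁻¹' A) ∆ A) := by
        rw [h0, zero_add]
        exact measure_iUnion_fintype_le _ _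

theorem isConservativeMap_of_iterate_add_eq_add [SigmaFinite μ]
    (hv : ∀ σ, Tendsto (v · σ) atTop (𝓝 0)) {S : G → G} {m : ℕ → ℕ} (hm : ∀ n, 0 < m n)
    (hS : ∀ n x, ∃ σ τ, S^[m n] (v n σ + x) = v n τ + x) : IsConservativeMap μ S := by
  intro A hA hpos
  obtain ⟨A', hA', hA'A, hpos', hfin⟩ := Measure.exists_subset_measure_lt_top hA hpos
  obtain ⟨n, hn⟩ := exists_measure_iInter_preimage_add_pos hv hA' hpos' hfin.ne
  refine ⟨m n, hm n, pos_of_ne_zero fun h0 => hn.ne' ?_⟩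
  have hcover : (⋂ σ, (v n σ + ·) ⁻¹' A') ⊆ ⋃ σ, (v n σ + ·) ⁻¹' (S^[m n] ⁻¹' A ∩ A) := by
    intro x hx
    have hxA : ∀ σ, v n σ + x ∈ A := fun σ => hA'A (mem_iInter.1 hx σ)
    obtain ⟨σ, τ, hστ⟩ := hS n x
    exact mem_iUnion.2 ⟨σ, show S^[m n] (v n σ + x) ∈ A from hστ ▸ hxA τ, hxA σ⟩
  refine measure_mono_null hcover (measure_iUnion_null fun σ => ?_)
  rw [measure_preimage_add, h0]

end Translation

theorem iterate_pi {κ X : Type*} (T : X → X) (m : ℕ) (x : κ → X) :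
    (fun (y : κ → X) i => T (y i))^[m] x = fun i => T^[m] (x i) := by
  induction m generalizing x with
  | zero => rfl
  | succ m ih => rw [Function.iterate_succ_apply, ih]; rfl

section ParityCocycle

theorem zmod_two_add_one_eq_of_ne : ∀ {a b : ZMod 2}, a ≠ b → a + 1 = b := by decide

variable {X : Type*} [MeasurableSpace X] {μ : Measure X} [NeZero μ] {T : X → X} {χ : X → ZMod 2}

theorem measure_preimage_singleton_ne_zero_of_map_eq_add_one (hT : MeasurePreserving T μ μ)
    (hχ : Measurable χ) (hχT : ∀ x, χ (T x) = χ x + 1) (c : ZMod 2) : μ (χ ⁻¹' {c}) ≠ 0 := by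
  intro hc
  have hstep : μ (χ ⁻¹' {c + 1}) = μ (χ ⁻¹' {c}) := by
    rw [← hT.measure_preimage (hχ (measurableSet_singleton _)).nullMeasurableSet]
    congr 1
    ext x
    simp [hχT]
  have hcover : χ ⁻¹' {c} ∪ χ ⁻¹' {c + 1} = univ := eq_univ_of_forall fun x =>
    or_iff_not_imp_left.2 fun h => (zmod_two_add_one_eq_of_ne (Ne.symm h)).symm
  refine NeZero.ne μ (Measure.measure_univ_eq_zero.1 ?_)
  rw [← hcover, measure_union_null hc (hstep.trans hc)]

theorem not_isErgodicMap_pi_of_map_eq_add_one {κ : Type*} [Fintype κ] [Nontrivial κ]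
    [SigmaFinite μ] (hT : MeasurePreserving T μ μ) (hχ : Measurable χ)
    (hχT : ∀ x, χ (T x) = χ x + 1) :
    ¬ IsErgodicMap (Measure.pi fun _ : κ => μ) (fun x i => T (x i)) := by
  classical
  obtain ⟨a, b, hab⟩ := exists_pair_ne κ
  have hbox : ∀ (c : κ → ZMod 2) {s : Set (κ → X)}, (∀ x, (∀ i, χ (x i) = c i) → x ∈ s) →
      Measure.pi (fun _ => μ) s ≠ 0 := fun c s hs h0 => by
    have h := measure_mono_null (fun x hx => hs x fun i => hx i (mem_univ i)) h0
      (s := univ.pi fun i => χ ⁻¹' {c i})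
    rw [Measure.pi_pi] at h
    exact Finset.prod_ne_zero_iff.2
      (fun i _ => measure_preimage_singleton_ne_zero_of_map_eq_add_one hT hχ hχT (c i)) h
  let E : Set (κ → X) := {x | χ (x a) = χ (x b)}
  have hE : MeasurableSet E := measurableSet_eq_fun
    (hχ.comp (measurable_pi_apply a)) (hχ.comp (measurable_pi_apply b))
  have hinv : (fun (x : κ → X) i => T (x i)) ⁻¹' E = E := by
    ext x
    simp [E, hχT]
  intro h
  rcases h E hE (by simp [hinv]) with h0 | h0
  · exact hbox 0 (fun x hx => (hx a).trans (hx b).symm) h0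
  · refine hbox (Pi.single a 1) (fun x hx => ?_) h0
    simp [E, hx, hab.symm]

end ParityCocycle

/-- Coordinates `bit i : G → ℤ/2` on a commutative group, through which a point of `G` is read as a
binary expansion, least significant digit first; adding the involution `flip i` changes the `i`-th
digit and no other one. Both values must occur infinitely often among the digits of each point, so
that carries and borrows terminate. -/
structure BinaryCoordinates (G : Type*) [AddCommGroup G] [MeasurableSpace G] where
  bit : ℕ → G → ZMod 2
  flip : ℕ → G
  measurable_bit : ∀ i, Measurable (bit i)
  flip_add_self : ∀ i, flip i + flip i = 0
  bit_flip_add : ∀ i j x, bit j (flip i + x) = bit j x + if j = i then 1 else 0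
  exists_bit_eq : ∀ a n x, ∃ j, n ≤ j ∧ bit j x = a

namespace BinaryCoordinates

section Algebra

variable {G : Type*} [AddCommGroup G] [MeasurableSpace G] (D : BinaryCoordinates G)

/-- The position of the first digit `a` of `x` at or after position `n`: for `a = 0` this is where
the carry stops when `2 ^ n` is added to `x`, for `a = 1` where the borrow stops when `2 ^ n` is
subtracted. -/
def carry (a : ZMod 2) (n : ℕ) (x : G) : ℕ := Nat.find (D.exists_bit_eq a n x)

/-- The binary odometer: `odometer 0 n` adds `2 ^ n` to the binary expansion of a point, and
`odometer 1 n` subtracts `2 ^ n`. Both flip the digits from the `n`-th to the carry position. -/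
def odometer (a : ZMod 2) (n : ℕ) (x : G) : G :=
  ∑ i ∈ Finset.Icc n (D.carry a n x), D.flip i + x

theorem flip_add_flip_add (n : ℕ) (x : G) : D.flip n + (D.flip n + x) = x := by
  rw [← add_assoc, D.flip_add_self, zero_add]

theorem bit_flip_add_self (n : ℕ) (x : G) : D.bit n (D.flip n + x) = D.bit n x + 1 := by
  rw [D.bit_flip_add, if_pos rfl]

theorem bit_sum_flip_add (s : Finset ℕ) (j : ℕ) (x : G) :
    D.bit j (∑ i ∈ s, D.flip i + x) = D.bit j x + if j ∈ s then 1 else 0 := by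
  induction s using Finset.induction_on with
  | empty => simp
  | insert i s hi ih =>
    rw [Finset.sum_insert hi, add_assoc, D.bit_flip_add, ih]
    by_cases hj : j = i <;> simp [hj, hi]

theorem carry_eq_iff {a : ZMod 2} {n j : ℕ} {x : G} :
    D.carry a n x = j ↔ (n ≤ j ∧ D.bit j x = a) ∧ ∀ i < j, n ≤ i → D.bit i x ≠ a := by
  simp only [carry, Nat.find_eq_iff, not_and, ne_eq]

theorem carry_of_bit_eq {a : ZMod 2} {n : ℕ} {x : G} (h : D.bit n x = a) : D.carry a n x = n :=
  D.carry_eq_iff.2 ⟨⟨le_rfl, h⟩, fun _ hi hn => absurd hi hn.not_gt⟩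

theorem carry_of_bit_ne {a : ZMod 2} {n : ℕ} {x : G} (h : D.bit n x ≠ a) :
    D.carry a n x = D.carry a (n + 1) x := by
  obtain ⟨⟨hle, hbit⟩, hlt⟩ := D.carry_eq_iff.1 (rfl : D.carry a (n + 1) x = _)
  refine D.carry_eq_iff.2 ⟨⟨n.le_succ.trans hle, hbit⟩, fun i hi hni => ?_⟩
  rcases hni.eq_or_lt with rfl | hni
  exacts [h, hlt i hi hni]

theorem carry_congr {a : ZMod 2} {n : ℕ} {x y : G} (h : ∀ i, n ≤ i → D.bit i x = D.bit i y) :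
    D.carry a n x = D.carry a n y := by
  obtain ⟨⟨hle, hbit⟩, hlt⟩ := D.carry_eq_iff.1 (rfl : D.carry a n y = _)
  exact D.carry_eq_iff.2 ⟨⟨hle, (h _ hle).trans hbit⟩, fun i hi hni => h i hni ▸ hlt i hi hni⟩

theorem bit_odometer (a : ZMod 2) (n j : ℕ) (x : G) :
    D.bit j (D.odometer a n x) = D.bit j x + if j ∈ Finset.Icc n (D.carry a n x) then 1 else 0 :=
  D.bit_sum_flip_add _ j x

theorem bit_odometer_self (a : ZMod 2) (n : ℕ) (x : G) :
    D.bit n (D.odometer a n x) = D.bit n x + 1 := by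
  rw [bit_odometer, if_pos (Finset.left_mem_Icc.2 (D.carry_eq_iff.1 rfl).1.1)]

theorem carry_odometer (a : ZMod 2) (n : ℕ) (x : G) :
    D.carry (a + 1) n (D.odometer a n x) = D.carry a n x := by
  obtain ⟨⟨hle, hbit⟩, hlt⟩ := D.carry_eq_iff.1 (rfl : D.carry a n x = _)
  refine D.carry_eq_iff.2 ⟨⟨hle, ?_⟩, fun i hi hni => ?_⟩
  · rw [bit_odometer, if_pos (Finset.right_mem_Icc.2 hle), hbit]
  · rw [bit_odometer, if_pos (Finset.mem_Icc.2 ⟨hni, hi.le⟩), Ne, add_left_inj]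
    exact hlt i hi hni

theorem odometer_add_one_odometer (a : ZMod 2) (n : ℕ) (x : G) :
    D.odometer (a + 1) n (D.odometer a n x) = x := by
  rw [odometer, carry_odometer, odometer, ← add_assoc, ← Finset.sum_add_distrib]
  simp only [D.flip_add_self, Finset.sum_const_zero, zero_add]

theorem odometer_of_bit_eq {a : ZMod 2} {n : ℕ} {x : G} (h : D.bit n x = a) :
    D.odometer a n x = D.flip n + x := by
  rw [odometer, D.carry_of_bit_eq h, Finset.Icc_self, Finset.sum_singleton]

theorem odometer_of_bit_ne {a : ZMod 2} {n : ℕ} {x : G} (h : D.bit n x ≠ a) :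
    D.odometer a n x = D.flip n + D.odometer a (n + 1) x := by
  have hle : n ≤ D.carry a (n + 1) x := n.le_succ.trans (D.carry_eq_iff.1 rfl).1.1
  rw [odometer, odometer, D.carry_of_bit_ne h, ← add_assoc,
    ← Finset.insert_Icc_add_one_left_eq_Icc hle, Finset.sum_insert (by simp)]

theorem odometer_succ_flip_add (a : ZMod 2) (n : ℕ) (x : G) :
    D.odometer a (n + 1) (D.flip n + x) = D.flip n + D.odometer a (n + 1) x := by
  have hcarry : D.carry a (n + 1) (D.flip n + x) = D.carry a (n + 1) x :=
    D.carry_congr fun i hi => by rw [D.bit_flip_add, if_neg (by lia), add_zero]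
  rw [odometer, odometer, hcarry, add_left_comm]

theorem odometer_odometer (a : ZMod 2) (n : ℕ) (x : G) :
    D.odometer a n (D.odometer a n x) = D.odometer a (n + 1) x := by
  have hbit := D.bit_odometer_self a n x
  by_cases h : D.bit n x = a
  · have hne : D.bit n (D.odometer a n x) ≠ a := by simp [hbit, h]
    rw [D.odometer_of_bit_ne hne, D.odometer_of_bit_eq h, odometer_succ_flip_add,
      flip_add_flip_add]
  · have heq : D.bit n (D.odometer a n x) = a := hbit.trans (zmod_two_add_one_eq_of_ne h)
    rw [D.odometer_of_bit_eq heq, D.odometer_of_bit_ne h, flip_add_flip_add]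

theorem odometer_iterate_two_pow (a : ZMod 2) (n : ℕ) :
    (D.odometer a 0)^[2 ^ n] = D.odometer a n := by
  induction n with
  | zero => rfl
  | succ n ih =>
    rw [pow_succ, Function.iterate_mul, ih]
    exact funext (D.odometer_odometer a n)

theorem odometer_iterate_of_bit_eq {a : ZMod 2} {n : ℕ} {x : G} (h : D.bit n x = a) :
    (D.odometer a 0)^[2 ^ n] x = D.flip n + x := by
  rw [odometer_iterate_two_pow, D.odometer_of_bit_eq h]

theorem odometer_iterate_add_eq_add (n : ℕ) (x : G) :
    (D.odometer 0 0)^[2 ^ n] ((if D.bit n x = 0 then 0 else D.flip n) + x) =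
      (if D.bit n x + 1 = 0 then 0 else D.flip n) + x := by
  by_cases h : D.bit n x = 0
  · simp [h, D.odometer_iterate_of_bit_eq h]
  · have h₀ := zmod_two_add_one_eq_of_ne h
    have hflip : D.bit n (D.flip n + x) = 0 := (D.bit_flip_add_self n x).trans h₀
    rw [if_neg h, if_pos h₀, D.odometer_iterate_of_bit_eq hflip, flip_add_flip_add, zero_add]

theorem preimage_flip_add_eq_of_preimage_odometer_eq {a : ZMod 2} {s : Set G}
    (hs : D.odometer a 0 ⁻¹' s = s) (n : ℕ) : (D.flip n + ·) ⁻¹' s = s := by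
  have hiter : (D.odometer a 0)^[2 ^ n] ⁻¹' s = s := by
    rw [preimage_iterate_eq, Function.iterate_fixed hs]
  have hmem : ∀ {x}, D.bit n x = a → (D.flip n + x ∈ s ↔ x ∈ s) := fun {x} hx => by
    rw [← D.odometer_iterate_of_bit_eq hx, ← mem_preimage, hiter]
  ext x
  by_cases hx : D.bit n x = a
  · exact hmem hx
  · have h := hmem ((D.bit_flip_add_self n x).trans (zmod_two_add_one_eq_of_ne hx))
    rw [flip_add_flip_add] at h
    exact h.symm

end Algebra

section Measure

variable {G : Type*} [AddCommGroup G] [MeasurableSpace G] (D : BinaryCoordinates G)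

theorem measurable_carry (a : ZMod 2) (n : ℕ) : Measurable (D.carry a n) :=
  measurable_find _ fun j =>
    (MeasurableSet.const (n ≤ j)).inter (D.measurable_bit j (measurableSet_singleton a))

theorem measurable_odometer [MeasurableAdd G] (a : ZMod 2) (n : ℕ) :
    Measurable (D.odometer a n) := by
  have h : Measurable fun p : ℕ × G => ∑ i ∈ Finset.Icc n p.1, D.flip i + p.2 :=
    measurable_from_prod_countable_right fun j =>
      measurable_const_add (∑ i ∈ Finset.Icc n j, D.flip i)
  exact h.comp ((D.measurable_carry a n).prodMk measurable_id)

/-- The odometer `odometer 0 0`, which adds `1` with carry, as a measurable automorphism. -/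
def odometerEquiv [MeasurableAdd G] : G ≃ᵐ G where
  toFun := D.odometer 0 0
  invFun := D.odometer 1 0
  left_inv := D.odometer_add_one_odometer 0 0
  right_inv := D.odometer_add_one_odometer 1 0
  measurable_toFun := D.measurable_odometer 0 0
  measurable_invFun := D.measurable_odometer 1 0

theorem measurePreserving_odometerEquiv [MeasurableAdd G] {μ : Measure G} [μ.IsAddLeftInvariant] :
    MeasurePreserving D.odometerEquiv μ μ :=
  measurePreserving_of_forall_eq_add D.odometerEquiv (D.measurable_carry 0 0)
    (fun j => ∑ i ∈ Finset.Icc 0 j, D.flip i) fun _ => rfl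

theorem not_isErgodicMap_pi_odometerEquiv [MeasurableAdd G] {μ : Measure G} [μ.IsAddLeftInvariant]
    [SigmaFinite μ] [NeZero μ] {κ : Type*} [Fintype κ] [Nontrivial κ] :
    ¬ IsErgodicMap (Measure.pi fun _ : κ => μ) (fun x i => D.odometerEquiv (x i)) :=
  not_isErgodicMap_pi_of_map_eq_add_one D.measurePreserving_odometerEquiv (D.measurable_bit 0)
    (D.bit_odometer_self 0 0)

variable [TopologicalSpace G] [IsTopologicalAddGroup G] [BorelSpace G]
  {μ : Measure G} [μ.IsAddLeftInvariant] [IsLocallyFiniteMeasure μ] [SigmaFinite μ]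

variable {r : ℕ → ℕ}

theorem isConservativeMap_odometerEquiv [μ.InnerRegularCompactLTTop]
    (hr : Tendsto (fun n => D.flip (r n)) atTop (𝓝 0)) : IsConservativeMap μ D.odometerEquiv := by
  refine isConservativeMap_of_iterate_add_eq_add (m := fun n => 2 ^ r n)
    (v := fun n (c : ZMod 2) => if c = 0 then 0 else D.flip (r n)) (fun c => ?_) (by simp)
    fun n x => ⟨_, _, D.odometer_iterate_add_eq_add (r n) x⟩
  split_ifs
  exacts [tendsto_const_nhds, hr]

variable [SecondCountableTopology G]

theorem isConservativeMap_pi_odometerEquiv [TopologicalSpace.IsCompletelyPseudoMetrizableSpace G]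
    (hr : Tendsto (fun n => D.flip (r n)) atTop (𝓝 0)) {κ : Type*} [Fintype κ] :
    IsConservativeMap (Measure.pi fun _ : κ => μ) (fun x i => D.odometerEquiv (x i)) := by
  refine isConservativeMap_of_iterate_add_eq_add (m := fun n => 2 ^ r n)
    (v := fun n (c : κ → ZMod 2) i => if c i = 0 then 0 else D.flip (r n)) (fun c => ?_) (by simp)
    fun n x => ⟨fun i => D.bit (r n) (x i), fun i => D.bit (r n) (x i) + 1, ?_⟩
  · refine tendsto_pi_nhds.2 fun i => ?_
    split_ifs
    exacts [tendsto_const_nhds, hr]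
  · rw [iterate_pi]
    exact funext fun i => D.odometer_iterate_add_eq_add (r n) (x i)

theorem isErgodicMap_odometerEquiv [μ.InnerRegularCompactLTTop]
    (hd : Dense (AddSubmonoid.closure (range D.flip) : Set G)) :
    IsErgodicMap μ D.odometerEquiv := by
  intro A hA hinv
  obtain ⟨B, hB, hBA, hBinv⟩ := (D.measurePreserving_odometerEquiv (μ := μ)).quasiMeasurePreserving
    |>.exists_preimage_eq_of_preimage_ae hA.nullMeasurableSet
      (measure_symmDiff_eq_zero_iff.1 hinv)
  have hstab : (AddSubmonoid.closure (range D.flip) : Set G) ⊆ {g | (g + ·) ⁻¹' B = B} := by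
    intro g hg
    induction hg using AddSubmonoid.closure_induction with
    | mem g hg =>
      obtain ⟨n, rfl⟩ := hg
      exact D.preimage_flip_add_eq_of_preimage_odometer_eq hBinv n
    | zero => simp
    | add g h _ _ hg hh =>
      calc (g + h + ·) ⁻¹' B = (h + ·) ⁻¹' ((g + ·) ⁻¹' B) := by
            simp only [preimage_preimage, add_assoc]
        _ = B := (congrArg _ hg).trans hh
  have hconst : EventuallyConst A (ae μ) :=
    (aeconst_of_dense_setOf_preimage_add_eq hB (hd.mono hstab)).congr hBA
  exact (eventuallyConst_set'.1 hconst).imp ae_eq_empty.1 ae_eq_univ.1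

end Measure

end BinaryCoordinates

theorem hasSum_pi_single_apply {ι : Type*} [DecidableEq ι] {M : ι → Type*}
    [∀ i, AddCommMonoid (M i)] [∀ i, TopologicalSpace (M i)] (f : ∀ i, M i) :
    HasSum (fun i => Pi.single i (f i)) f := by
  refine Pi.hasSum.2 fun j => ?_
  have h := hasSum_single (f := fun i => (Pi.single i (f i) : ∀ i, M i) j) j
    fun i hi => Pi.single_eq_of_ne hi.symm _
  rwa [Pi.single_eq_same] at h

section OdometerSpace

local instance : TopologicalSpace (ℕ →₀ ZMod 2) := ⊥
local instance : DiscreteTopology (ℕ →₀ ZMod 2) := ⟨rfl⟩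
local instance : MeasurableSpace (ℕ →₀ ZMod 2) := ⊤
local instance : DiscreteMeasurableSpace (ℕ →₀ ZMod 2) := ⟨fun _ => trivial⟩

/-- The group `(ℤ/2)^ℕ × ⨁_ℕ ℤ/2`, with the product of the compact topology of the first factor and
the discrete topology of the second. -/
abbrev OdometerSpace : Type := (ℕ → ZMod 2) × (ℕ →₀ ZMod 2)

namespace OdometerSpace

/-- The digits of a point of `OdometerSpace`: those at even positions are free, and those at odd
positions are measured against the alternating sequence `0, 1, 0, 1, …`, from which they deviate
only finitely often. -/
def bit (i : ℕ) (x : OdometerSpace) : ZMod 2 :=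
  if Even i then x.1 (i / 2) else x.2 (i / 2) + (i / 2 : ℕ)

/-- The element of `OdometerSpace` whose addition changes the `i`-th digit. -/
noncomputable def flip (i : ℕ) : OdometerSpace :=
  if Even i then (Pi.single (i / 2) 1, 0) else (0, Finsupp.single (i / 2) 1)

theorem bit_two_mul (m : ℕ) (x : OdometerSpace) : bit (2 * m) x = x.1 m := by simp [bit]

theorem bit_two_mul_add_one (m : ℕ) (x : OdometerSpace) : bit (2 * m + 1) x = x.2 m + m := by
  simp [bit, Nat.mul_add_div]

theorem flip_two_mul (m : ℕ) : flip (2 * m) = (Pi.single m 1, 0) := by simp [flip]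

theorem flip_two_mul_add_one (m : ℕ) : flip (2 * m + 1) = (0, Finsupp.single m 1) := by
  simp [flip, Nat.mul_add_div]

theorem measurable_bit (i : ℕ) : Measurable (bit i) := by
  rcases i.even_or_odd' with ⟨m, rfl | rfl⟩
  · rw [funext (bit_two_mul m)]
    fun_prop
  · rw [funext (bit_two_mul_add_one m)]
    exact (Measurable.of_discrete (f := fun s : ℕ →₀ ZMod 2 => s m + m)).comp measurable_snd

theorem bit_flip_add (i j : ℕ) (x : OdometerSpace) :
    bit j (flip i + x) = bit j x + if j = i then 1 else 0 := by
  rcases i.even_or_odd' with ⟨m, rfl | rfl⟩ <;> rcases j.even_or_odd' with ⟨l, rfl | rfl⟩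
  · simp [bit_two_mul, flip_two_mul, Pi.single_apply, add_comm]
  · rw [if_neg (by lia)]
    simp [bit_two_mul_add_one, flip_two_mul]
  · rw [if_neg (by lia)]
    simp [bit_two_mul, flip_two_mul_add_one]
  · rw [bit_two_mul_add_one, bit_two_mul_add_one, flip_two_mul_add_one]
    simp [Finsupp.single_apply, add_comm, add_left_comm, eq_comm]

theorem exists_bit_eq (a : ZMod 2) (n : ℕ) (x : OdometerSpace) : ∃ j, n ≤ j ∧ bit j x = a := by
  obtain ⟨N, hN⟩ := x.2.support.exists_nat_subset_range
  let m := 2 * (N + n) + a.val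
  have hm : x.2 m = 0 := Finsupp.notMem_support_iff.1 fun h => by
    have := Finset.mem_range.1 (hN h)
    lia
  refine ⟨2 * m + 1, by lia, ?_⟩
  rw [bit_two_mul_add_one, hm]
  simp [m, CharTwo.two_eq_zero]

/-- The binary coordinates on `OdometerSpace` that define the odometer of the theorem. -/
noncomputable def digits : BinaryCoordinates OdometerSpace where
  bit := bit
  flip := flip
  measurable_bit := measurable_bit
  flip_add_self i := by
    rw [flip]
    split_ifs <;> ext <;> simp [CharTwo.add_self_eq_zero]
  bit_flip_add := bit_flip_add
  exists_bit_eq := exists_bit_eq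

theorem tendsto_flip_two_mul : Tendsto (fun m => flip (2 * m)) atTop (𝓝 0) := by
  have h := (hasSum_pi_single_apply (1 : ℕ → ZMod 2)).summable.tendsto_cofinite_zero
  rw [Nat.cofinite_eq_atTop] at h
  simp only [flip_two_mul]
  exact h.prodMk_nhds tendsto_const_nhds

theorem dense_closure_range_flip :
    Dense (AddSubmonoid.closure (range flip) : Set OdometerSpace) := by
  let H := (AddSubmonoid.closure (range flip)).topologicalClosure
  have hflip : ∀ i, flip i ∈ AddSubmonoid.closure (range flip) :=
    fun i => AddSubmonoid.subset_closure (mem_range_self i)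
  have hfst : ∀ c : ℕ → ZMod 2, ((c, 0) : OdometerSpace) ∈ H := fun c => by
    have hc : HasSum (fun n => ((Pi.single n (c n), 0) : OdometerSpace)) (c, 0) :=
      (hasSum_pi_single_apply c).prodMk hasSum_zero
    refine mem_closure_of_tendsto hc (.of_forall fun s => sum_mem fun n _ => ?_)
    by_cases h : c n = 0
    · rw [h, Pi.single_zero]
      exact zero_mem _
    · rw [show c n = 1 from Fin.eq_one_of_ne_zero _ h, ← flip_two_mul]
      exact hflip _
  have hsnd : ∀ s : ℕ →₀ ZMod 2, ((0, s) : OdometerSpace) ∈ H := fun s => by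
    induction s using Finsupp.induction_linear with
    | zero => exact zero_mem H
    | add s t hs ht => simpa using add_mem hs ht
    | single n a =>
      by_cases h : a = 0
      · rw [h, Finsupp.single_zero]
        exact zero_mem H
      · rw [show a = 1 from Fin.eq_one_of_ne_zero _ h, ← flip_two_mul_add_one]
        exact AddSubmonoid.le_topologicalClosure _ (hflip _)
  intro x
  have hx := add_mem (hfst x.1) (hsnd x.2)
  rwa [Prod.mk_add_mk, add_zero, zero_add] at hx

instance : NoncompactSpace OdometerSpace where
  noncompact_univ h := by
    have hfin := (h.image continuous_snd).finite_of_discrete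
    rw [image_univ, Prod.range_snd] at hfin
    exact infinite_univ hfin

instance : (𝓝[≠] (0 : OdometerSpace)).NeBot := by
  refine (tendsto_nhdsWithin_iff.2 ⟨tendsto_flip_two_mul, .of_forall fun m => ?_⟩).neBot
  simp [flip_two_mul]

end OdometerSpace

open OdometerSpace in
theorem stmt11_general :
    ∃ (X : Type) (_ : MeasurableSpace X) (_ : StandardBorelSpace X)
      (μ : Measure X) (_ : NullSingletonClass μ) (_ : SigmaFinite μ) (T : X ≃ᵐ X),
      μ univ = ⊤ ∧ MeasurePreserving T μ μ ∧ IsConservativeMap μ T ∧ IsErgodicMap μ T ∧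
      ∀ (κ : Type*) [Fintype κ],
        IsConservativeMap (Measure.pi fun _ : κ => μ) (fun x i => T (x i)) ∧
        (Nontrivial κ → ¬ IsErgodicMap (Measure.pi fun _ : κ => μ) (fun x i => T (x i))) :=
  ⟨OdometerSpace, inferInstance, inferInstance, Measure.addHaar, inferInstance, inferInstance,
    digits.odometerEquiv, measure_univ_of_isAddLeftInvariant _,
    digits.measurePreserving_odometerEquiv,
    digits.isConservativeMap_odometerEquiv tendsto_flip_two_mul,
    digits.isErgodicMap_odometerEquiv dense_closure_range_flip,
    fun _ _ => ⟨digits.isConservativeMap_pi_odometerEquiv tendsto_flip_two_mul,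
      fun _ => digits.not_isErgodicMap_pi_odometerEquiv⟩⟩

end OdometerSpace

theorem stmt11 (k : ℕ) (hk : 2 ≤ k) :
    ∃ (X : Type) (_ : MeasurableSpace X) (_ : StandardBorelSpace X)
      (μ : Measure X) (_ : NoAtoms μ) (_ : SigmaFinite μ) (T : X ≃ᵐ X),
      μ Set.univ = ⊤ ∧ MeasurePreserving T μ μ ∧
      IsConservativeMap (Measure.pi fun _ : Fin k => μ)
        (fun x : Fin k → X => fun i => T (x i)) ∧
      ¬ IsErgodicMap (Measure.pi fun _ : Fin k => μ)
        (fun x : Fin k → X => fun i => T (x i)) ∧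
      IsConservativeMap μ ⇑T ∧ IsErgodicMap μ ⇑T := by
  obtain ⟨X, hX, hX', μ, h0, hσ, T, htop, hT, hcons, herg, hpi⟩ := stmt11_general
  exact ⟨X, hX, hX', μ, h0, hσ, T, htop, hT, (hpi (Fin k)).1,
    (hpi (Fin k)).2 (Fin.nontrivial_iff_two_le.2 hk), hcons, herg⟩
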